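/- arXiv:2306.09771 — 2 statements merged into one kernel-verified Lean document; each statement's English description precedes it below -/
import Mathlib

section
/- Let M > 1, L > 0, let φ : ℝ → ℝ be the clamp function, and define R : C(ℝ) → C(ℝ) by (Rξ)(x) = (1/(2√(M−1))) ∫_{Mx−M+1}^{Mx+M−1} φ(Lξ(y)) dy. Then for every continuous ξ : ℝ → ℝ, the function Rξ is Lipschitz continuous with Lipschitz constant M/√(M−1); in particular Rξ is continuous, so R indeed maps C(ℝ) into C(ℝ). -/
open MeasureTheory

/-- The clamp function: `-1` for `x ≤ -1`, `x` for `-1 < x < 1`, `1` for `x ≥ 1`. -/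
noncomputable def clamp (x : ℝ) : ℝ := if x ≤ -1 then -1 else if x < 1 then x else 1

/-- The map `R` of the Tsirelson–Vershik iteration scheme:
`(Rξ)(x) = (1/(2√(M−1))) ∫_{Mx−M+1}^{Mx+M−1} φ(Lξ(y)) dy`. -/
noncomputable def Rmap (L M : ℝ) (ξ : ℝ → ℝ) (x : ℝ) : ℝ :=
  (1 / (2 * Real.sqrt (M - 1))) * ∫ y in (M * x - M + 1)..(M * x + M - 1), clamp (L * ξ y)

theorem clamp_eq (x : ℝ) : clamp x = max (-1) (min x 1) := by
  unfold clamp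
  split_ifs with h1 h2
  · rw [min_eq_left (by linarith), max_eq_left h1]
  · rw [min_eq_left h2.le, max_eq_right (by linarith)]
  · rw [min_eq_right (by linarith), max_eq_right (by norm_num)]

theorem stmt_1 (M L : ℝ) (hM : 1 < M) (hL : 0 < L)
    (ξ : ℝ → ℝ) (hξ : Continuous ξ) :
    (∀ x y : ℝ, |Rmap L M ξ x - Rmap L M ξ y| ≤ (M / Real.sqrt (M - 1)) * |x - y|) ∧
      Continuous (Rmap L M ξ) := by
  have key : ∀ x y : ℝ, |Rmap L M ξ x - Rmap L M ξ y| ≤ (M / Real.sqrt (M - 1)) * |x - y| := by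
    intro x y
    have hs : 0 < Real.sqrt (M - 1) := Real.sqrt_pos.2 (by linarith)
    have hc : Continuous fun y => clamp (L * ξ y) := by
      simp only [clamp_eq]
      fun_prop
    have hi : ∀ a b : ℝ, IntervalIntegrable (fun y => clamp (L * ξ y)) volume a b :=
      fun a b => hc.intervalIntegrable a b
    have hb : ∀ a b : ℝ, |∫ y in a..b, clamp (L * ξ y)| ≤ |b - a| := by
      intro a b
      have := intervalIntegral.norm_integral_le_of_norm_le_const (a := a) (b := b) (C := 1)
        (f := fun y => clamp (L * ξ y)) (by
          intro z _
          rw [Real.norm_eq_abs, abs_le, clamp_eq]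
          exact ⟨le_max_left _ _, max_le (by norm_num) (min_le_right _ _)⟩)
      simpa using this
    unfold Rmap
    rw [← mul_sub, intervalIntegral.integral_interval_sub_interval_comm' (hi _ _) (hi _ _) (hi _ _),
      abs_mul, abs_of_pos (by positivity)]
    have h1 := hb (M * y + M - 1) (M * x + M - 1)
    have h2 := hb (M * y - M + 1) (M * x - M + 1)
    have e1 : |M * x + M - 1 - (M * y + M - 1)| = M * |x - y| := by
      rw [← abs_of_pos (show 0 < M by linarith), ← abs_mul, abs_of_pos (show 0 < M by linarith)]
      congr 1; ring
    have e2 : |M * x - M + 1 - (M * y - M + 1)| = M * |x - y| := by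
      rw [← e1]; congr 1; ring
    rw [e1] at h1
    rw [e2] at h2
    calc _ ≤ 1 / (2 * Real.sqrt (M - 1)) * (M * |x - y| + M * |x - y|) := by
          gcongr
          refine (abs_sub _ _).trans (add_le_add h1 ?_)
          rw [intervalIntegral.integral_symm, abs_neg] at *
          assumption
      _ = _ := by field_simp; ring
  refine ⟨key, ?_⟩
  refine (LipschitzWith.of_dist_le_mul (K := Real.toNNReal (M / Real.sqrt (M - 1))) ?_).continuous
  intro x y
  rw [Real.coe_toNNReal _ (div_nonneg (by linarith) (Real.sqrt_nonneg _)), Real.dist_eq, Real.dist_eq]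
  exact key x y
end

section
/- Let φ : ℝ → ℝ be the clamp function. Let Z₁ and Z₂ be independent standard Gaussian random variables, let σ > 0 and ρ ∈ [−1, 1], and set X = σZ₁ and Y = σ(ρZ₁ + √(1−ρ²) Z₂). Then lim_{L → ∞} E[φ(L X) · φ(L Y)] = (2/π) · arcsin(ρ). -/
open MeasureTheory ProbabilityTheory Filter

lemma clamp_abs (x : ℝ) : |clamp x| ≤ 1 := by
  unfold clamp
  split_ifs <;> rw [abs_le] <;> constructor <;> linarith

lemma clamp_meas : Measurable clamp := by
  unfold clamp
  exact Measurable.ite measurableSet_Iic measurable_const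
    (Measurable.ite measurableSet_Iio measurable_id measurable_const)

lemma clamp_tendsto (x : ℝ) :
    Tendsto (fun L : ℝ => clamp (L * x)) atTop (nhds (Real.sign x)) := by
  rcases lt_trichotomy x 0 with h | h | h
  · rw [Real.sign_of_neg h]
    apply tendsto_const_nhds.congr'
    filter_upwards [(tendsto_id.atTop_mul_const_of_neg h).eventually (eventually_le_atBot (-1))]
      with L hL
    simp only [id] at hL
    simp [clamp, hL]
  · subst h
    simp [clamp]
  · rw [Real.sign_of_pos h]
    apply tendsto_const_nhds.congr'
    filter_upwards [(tendsto_id.atTop_mul_const h).eventually (eventually_ge_atTop 1)] with L hL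
    simp only [id] at hL
    simp only [clamp]
    rw [if_neg (by linarith), if_neg (by linarith)]

lemma sign_meas : Measurable Real.sign := by
  unfold Real.sign
  exact Measurable.ite measurableSet_Iio measurable_const
    (Measurable.ite measurableSet_Ioi measurable_const measurable_const)

lemma sign_mul_pos' (r x : ℝ) (hr : 0 < r) : Real.sign (r * x) = Real.sign x := by
  rcases lt_trichotomy x 0 with h | h | h
  · rw [Real.sign_of_neg h, Real.sign_of_neg (mul_neg_of_pos_of_neg hr h)]
  · simp [h]
  · rw [Real.sign_of_pos h, Real.sign_of_pos (mul_pos hr h)]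

lemma sign_abs_le (x : ℝ) : |Real.sign x| ≤ 1 := by
  rcases Real.sign_apply_eq x with h | h | h <;> rw [h] <;> norm_num

lemma radial : ∫ r in Set.Ioi (0 : ℝ), r * Real.exp (-r ^ 2 / 2) = 1 := by
  have h : ∀ x ∈ Set.Ici (0 : ℝ), HasDerivAt (fun r : ℝ => - Real.exp (-r ^ 2 / 2))
      (x * Real.exp (-x ^ 2 / 2)) x := by
    intro x _
    have h0 : HasDerivAt (fun r : ℝ => -r ^ 2 / 2) (-x) x := by
      have := ((hasDerivAt_pow 2 x).neg.div_const 2)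
      refine this.congr_deriv ?_
      norm_num
      ring
    refine h0.exp.neg.congr_deriv ?_
    ring
  have ht : Tendsto (fun r : ℝ => - Real.exp (-r ^ 2 / 2)) atTop (nhds (-0)) := by
    apply Tendsto.neg
    apply Real.tendsto_exp_atBot.comp
    have : Tendsto (fun r : ℝ => r ^ 2) atTop atTop := tendsto_pow_atTop (by norm_num)
    exact (tendsto_neg_atTop_atBot.comp this).atBot_div_const (by norm_num)
  rw [integral_Ioi_of_hasDerivAt_of_nonneg' h
    (fun x hx => mul_nonneg (le_of_lt hx) (Real.exp_pos _).le) ht]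
  simp

lemma angular (α : ℝ) (h1 : -(Real.pi / 2) ≤ α) (h2 : α ≤ Real.pi / 2) :
    ∫ θ in Set.Ioo (-Real.pi) Real.pi, Real.sign (Real.cos θ) * Real.sign (Real.sin (θ + α))
      = 4 * α := by
  have hpi := Real.pi_pos
  set f : ℝ → ℝ := fun θ => Real.sign (Real.cos θ) * Real.sign (Real.sin (θ + α)) with hf
  have hm : Measurable f := by
    apply Measurable.mul
    · exact sign_meas.comp Real.measurable_cos
    · exact sign_meas.comp (Real.measurable_sin.comp (measurable_id.add_const α))
  have hb : ∀ x, ‖f x‖ ≤ 1 := by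
    intro x
    rw [hf, Real.norm_eq_abs, abs_mul]
    exact mul_le_one₀ (sign_abs_le _) (abs_nonneg _) (sign_abs_le _)
  have hint : ∀ a b : ℝ, IntervalIntegrable f volume a b := by
    intro a b
    apply (intervalIntegrable_const (c := (1 : ℝ))).mono_fun hm.aestronglyMeasurable
    exact Eventually.of_forall (fun x => by simpa using hb x)
  have hper : Function.Periodic f Real.pi := by
    intro x
    simp only [hf]
    rw [Real.cos_add_pi, show x + Real.pi + α = (x + α) + Real.pi by ring, Real.sin_add_pi,
      Real.sign_neg, Real.sign_neg]
    ring
  rw [← integral_Ioc_eq_integral_Ioo, ← intervalIntegral.integral_of_le (by linarith)]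
  rw [← intervalIntegral.integral_add_adjacent_intervals (hint _ 0) (hint 0 _)]
  have e1 := hper.intervalIntegral_add_eq (-Real.pi) (-(Real.pi / 2))
  have e2 := hper.intervalIntegral_add_eq 0 (-(Real.pi / 2))
  rw [show -Real.pi + Real.pi = 0 by ring] at e1
  rw [show 0 + Real.pi = Real.pi by ring] at e2
  rw [e1, e2, show -(Real.pi / 2) + Real.pi = Real.pi / 2 by ring]
  rw [← intervalIntegral.integral_add_adjacent_intervals (hint _ (-α)) (hint (-α) _)]
  have i1 : ∫ x in (-(Real.pi / 2))..(-α), f x = ∫ x in (-(Real.pi / 2))..(-α), (-1 : ℝ) := by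
    rw [intervalIntegral.integral_of_le (by linarith), intervalIntegral.integral_of_le (by linarith),
      integral_Ioc_eq_integral_Ioo, integral_Ioc_eq_integral_Ioo]
    apply setIntegral_congr_fun measurableSet_Ioo
    intro x hx
    simp only [hf]
    rw [Real.sign_of_pos (Real.cos_pos_of_mem_Ioo ⟨by linarith [hx.1], by linarith [hx.2]⟩),
      Real.sign_of_neg (Real.sin_neg_of_neg_of_neg_pi_lt (by linarith [hx.2]) (by linarith [hx.1]))]
    norm_num
  have i2 : ∫ x in (-α)..(Real.pi / 2), f x = ∫ x in (-α)..(Real.pi / 2), (1 : ℝ) := by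
    rw [intervalIntegral.integral_of_le (by linarith), intervalIntegral.integral_of_le (by linarith),
      integral_Ioc_eq_integral_Ioo, integral_Ioc_eq_integral_Ioo]
    apply setIntegral_congr_fun measurableSet_Ioo
    intro x hx
    simp only [hf]
    rw [Real.sign_of_pos (Real.cos_pos_of_mem_Ioo ⟨by linarith [hx.1], by linarith [hx.2]⟩),
      Real.sign_of_pos (Real.sin_pos_of_pos_of_lt_pi (by linarith [hx.1]) (by linarith [hx.2]))]
    norm_num
  rw [i1, i2]
  simp only [intervalIntegral.integral_const, smul_eq_mul]
  ring

lemma gauss_sign (ρ : ℝ) (hρ : ρ ∈ Set.Icc (-1 : ℝ) 1) :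
    ∫ p : ℝ × ℝ, Real.sign p.1 * Real.sign (ρ * p.1 + Real.sqrt (1 - ρ ^ 2) * p.2)
      ∂((gaussianReal 0 1).prod (gaussianReal 0 1)) = 2 / Real.pi * Real.arcsin ρ := by
  have hpi := Real.pi_pos
  rw [gaussianReal_of_var_ne_zero 0 (one_ne_zero),
    prod_withDensity (measurable_gaussianPDF 0 1) (measurable_gaussianPDF 0 1),
    integral_withDensity_eq_integral_toReal_smul
      (f := fun z : ℝ × ℝ => gaussianPDF 0 1 z.1 * gaussianPDF 0 1 z.2)
      (((measurable_gaussianPDF 0 1).comp measurable_fst).mul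
        ((measurable_gaussianPDF 0 1).comp measurable_snd))
      (Eventually.of_forall fun x => ENNReal.mul_lt_top (by simp [gaussianPDF]) (by simp [gaussianPDF]))]
  rw [← Measure.volume_eq_prod, ← integral_comp_polarCoord_symm]
  have hα : Real.sin (Real.arcsin ρ) = ρ := Real.sin_arcsin hρ.1 hρ.2
  have hc : Real.sqrt (1 - ρ ^ 2) = Real.cos (Real.arcsin ρ) := (Real.cos_arcsin ρ).symm
  have key : ∀ p ∈ polarCoord.target,
      p.1 • (((gaussianPDF 0 1 (polarCoord.symm p).1 * gaussianPDF 0 1 (polarCoord.symm p).2).toReal) •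
        (Real.sign (polarCoord.symm p).1 *
          Real.sign (ρ * (polarCoord.symm p).1 + Real.sqrt (1 - ρ ^ 2) * (polarCoord.symm p).2)))
      = (p.1 * Real.exp (-p.1 ^ 2 / 2)) * ((2 * Real.pi)⁻¹ *
        (Real.sign (Real.cos p.2) * Real.sign (Real.sin (p.2 + Real.arcsin ρ)))) := by
    rintro ⟨r, θ⟩ hp
    have hr : 0 < r := by
      rw [polarCoord_target] at hp
      exact hp.1
    simp only [polarCoord_symm_apply, ENNReal.toReal_mul, toReal_gaussianPDF, smul_eq_mul]
    rw [sign_mul_pos' r _ hr, show ρ * (r * Real.cos θ) + Real.sqrt (1 - ρ ^ 2) * (r * Real.sin θ)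
      = r * Real.sin (θ + Real.arcsin ρ) by rw [Real.sin_add, hα, hc]; ring, sign_mul_pos' r _ hr]
    have hpdf : gaussianPDFReal 0 1 (r * Real.cos θ) * gaussianPDFReal 0 1 (r * Real.sin θ)
        = (2 * Real.pi)⁻¹ * Real.exp (-r ^ 2 / 2) := by
      simp only [gaussianPDFReal, NNReal.coe_one, mul_one, sub_zero]
      rw [mul_mul_mul_comm, ← Real.exp_add, ← mul_inv, Real.mul_self_sqrt (by positivity)]
      congr 2
      linear_combination (-r ^ 2 / 2) * Real.sin_sq_add_cos_sq θ
    rw [hpdf]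
    ring
  have hms : MeasurableSet polarCoord.target := polarCoord.open_target.measurableSet
  refine (setIntegral_congr_fun hms key).trans ?_
  rw [polarCoord_target, Measure.volume_eq_prod,
    setIntegral_prod_mul (fun r : ℝ => r * Real.exp (-r ^ 2 / 2)) (fun θ : ℝ => (2 * Real.pi)⁻¹ *
        (Real.sign (Real.cos θ) * Real.sign (Real.sin (θ + Real.arcsin ρ)))), radial,
    integral_const_mul, angular _ (Real.neg_pi_div_two_le_arcsin ρ) (Real.arcsin_le_pi_div_two ρ)]
  field_simp
  norm_num

theorem stmt_11 {Ω : Type*} [MeasureSpace Ω] [IsProbabilityMeasure (volume : Measure Ω)]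
    (Z₁ Z₂ : Ω → ℝ) (hZ₁ : Measurable Z₁) (hZ₂ : Measurable Z₂)
    (hindep : IndepFun Z₁ Z₂ volume)
    (hlaw₁ : Measure.map Z₁ volume = gaussianReal 0 1)
    (hlaw₂ : Measure.map Z₂ volume = gaussianReal 0 1)
    (σ : ℝ) (hσ : 0 < σ) (ρ : ℝ) (hρ : ρ ∈ Set.Icc (-1 : ℝ) 1) :
    Tendsto
      (fun L : ℝ => ∫ ω, clamp (L * (σ * Z₁ ω)) *
        clamp (L * (σ * (ρ * Z₁ ω + Real.sqrt (1 - ρ ^ 2) * Z₂ ω))))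
      atTop (nhds ((2 / Real.pi) * Real.arcsin ρ)) := by
  have hmap := (indepFun_iff_map_prod_eq_prod_map_map hZ₁.aemeasurable hZ₂.aemeasurable).1 hindep
  rw [hlaw₁, hlaw₂] at hmap
  rw [← gauss_sign ρ hρ, ← hmap, integral_map (hZ₁.prodMk hZ₂).aemeasurable]
  · apply tendsto_integral_filter_of_dominated_convergence (fun _ => (1 : ℝ))
    · refine Eventually.of_forall fun L => Measurable.aestronglyMeasurable ?_
      apply Measurable.mul
      · exact clamp_meas.comp (by fun_prop)
      · exact clamp_meas.comp (by fun_prop)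
    · refine Eventually.of_forall fun L => Eventually.of_forall fun ω => ?_
      rw [Real.norm_eq_abs, abs_mul]
      exact mul_le_one₀ (clamp_abs _) (abs_nonneg _) (clamp_abs _)
    · exact integrable_const _
    · refine Eventually.of_forall fun ω => ?_
      have h1 := clamp_tendsto (σ * Z₁ ω)
      have h2 := clamp_tendsto (σ * (ρ * Z₁ ω + Real.sqrt (1 - ρ ^ 2) * Z₂ ω))
      rw [sign_mul_pos' _ _ hσ] at h1 h2
      exact h1.mul h2
  · apply Measurable.aestronglyMeasurable
    apply Measurable.mul
    · exact sign_meas.comp measurable_fst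
    · exact sign_meas.comp (by fun_prop)
end
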